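/- Let k, m be positive integers. (a) For each j with 1 ≤ j ≤ k, the element x_1^{m+k−1}·x_2^{m+k−2}·…·x_j^{m+k−j}·x_j vanishes in R(k,m). (b) The annihilator of the nonzero element x_1^{m+k−1}·x_2^{m+k−2}·…·x_k^m in R(k,m) is exactly the ideal generated by x_1,…,x_k (the ideal of all elements of positive degree): an element y of R(k,m) satisfies y·x_1^{m+k−1}·x_2^{m+k−2}·…·x_k^m = 0 if and only if y lies in the ideal (x_1,…,x_k). -/

import Mathlib

/-!
Put `N = m + k` and index the variables from `0`, so that the relations read
`h_{N-j}(x_0, …, x_j) = 0` for `j < k`.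

The product `x_0^{N-1} ⋯ x_{j-1}^{N-j}` kills `x_0, …, x_{j-1}` by induction, so multiplying the
`j`-th relation by it leaves only the term `x_j^{N-j}`. This is the vanishing statement.

The `j`-th relation is also monic of degree `N - j` in `x_j`. Adjoining a root of one relation at a
time therefore gives a tower of free extensions in which `1, x_j, …, x_j^{N-1-j}` are independent
at the `j`-th stage. Hence no nonzero constant kills the top monomial `x_0^{N-1} ⋯ x_{k-1}^{N-k}`,
over any coefficient ring. Every element is a constant modulo `(x_0, …, x_{k-1})`, and the top
monomial is killed by all the variables, so its annihilator is that ideal.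
-/

open scoped TensorProduct

/-- Complete homogeneous symmetric polynomial of degree `d` in a list of elements
of a commutative (semi)ring: `h_d(l)`. -/
noncomputable def completeHomog {R : Type*} [CommSemiring R] : List R → ℕ → R
  | [], 0 => 1
  | [], _ + 1 => 0
  | x :: l, d => ∑ t ∈ Finset.range (d + 1), x ^ t * completeHomog l (d - t)

/-- Elementary symmetric polynomial of degree `d` in a list of elements: `e_d(l)`. -/
noncomputable def elemSymm {R : Type*} [CommSemiring R] : List R → ℕ → R
  | _, 0 => 1
  | [], _ + 1 => 0
  | x :: l, d + 1 => elemSymm l (d + 1) + x * elemSymm l d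

/-- The ideal of `(ZMod 2)[x_1, …, x_k]` generated by the complete homogeneous
symmetric polynomials `h_{m+i}(x_1, …, x_{k+1-i})` for `1 ≤ i ≤ k`. -/
noncomputable def flagIdeal (k m : ℕ) : Ideal (MvPolynomial (Fin k) (ZMod 2)) :=
  Ideal.span { p | ∃ i : ℕ, 1 ≤ i ∧ i ≤ k ∧
    p = completeHomog (((List.finRange k).take (k + 1 - i)).map MvPolynomial.X) (m + i) }

/-- `R(k,m)`, the quotient of `(ZMod 2)[x_1, …, x_k]` by `flagIdeal k m`;
this is the mod-2 cohomology ring of the real flag manifold `F(1^k, m)`. -/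
abbrev FlagRing (k m : ℕ) : Type :=
  MvPolynomial (Fin k) (ZMod 2) ⧸ flagIdeal k m

/-- The image of the variable `x_{j+1}` in `R(k,m)` (`j` is 0-indexed). -/
noncomputable def xGen (k m : ℕ) (j : Fin k) : FlagRing k m :=
  Ideal.Quotient.mk (flagIdeal k m) (MvPolynomial.X j)

/-- The zero-divisor `z_{j+1} = x_{j+1} ⊗ 1 + 1 ⊗ x_{j+1}` in `R(k,m) ⊗ R(k,m)`. -/
noncomputable def zGen (k m : ℕ) (j : Fin k) :
    FlagRing k m ⊗[ZMod 2] FlagRing k m :=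
  xGen k m j ⊗ₜ 1 + 1 ⊗ₜ xGen k m j

/-- `x_{i+1,j+1}` in the `s`-fold tensor power `R(k,m)^{⊗ s}`: the element having
`x_{j+1}` in the `(i+1)`-st tensor factor and `1` elsewhere (`i`, `j` 0-indexed). -/
noncomputable def xT (k m s : ℕ) (i : Fin s) (j : Fin k) :
    ⨂[ZMod 2] _ : Fin s, FlagRing k m :=
  PiTensorProduct.tprod (ZMod 2) (fun t => if t = i then xGen k m j else 1)

/-- The `s`-th zero-divisor `z_{i+1,j+1} = x_{1,j+1} + x_{i+1,j+1}` in `R(k,m)^{⊗ s}`. -/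
noncomputable def zT (k m s : ℕ) (hs : 0 < s) (i : Fin s) (j : Fin k) :
    ⨂[ZMod 2] _ : Fin s, FlagRing k m :=
  xT k m s ⟨0, hs⟩ j + xT k m s i j

universe u

section CompleteHomog

variable {R S : Type*} [CommSemiring R] [CommSemiring S]

theorem map_completeHomog (φ : R →+* S) (l : List R) (d : ℕ) :
    φ (completeHomog l d) = completeHomog (l.map φ) d := by
  induction l generalizing d with
  | nil => cases d <;> simp [completeHomog]
  | cons x l ih => simp [completeHomog, ih]

theorem completeHomog_zero (l : List R) : completeHomog l 0 = 1 := by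
  induction l with
  | nil => rfl
  | cons x l ih => simp [completeHomog, ih]

theorem completeHomog_cons_succ (x : R) (l : List R) (d : ℕ) :
    completeHomog (x :: l) (d + 1) = x * completeHomog (x :: l) d + completeHomog l (d + 1) := by
  simp only [completeHomog, Finset.sum_range_succ' _ (d + 1), Finset.mul_sum, pow_succ', mul_assoc,
    Nat.add_sub_add_right, pow_zero, one_mul, Nat.sub_zero]

theorem completeHomog_singleton (x : R) (d : ℕ) : completeHomog [x] d = x ^ d := by
  induction d with
  | zero => rw [completeHomog_zero, pow_zero]
  | succ d ih => rw [completeHomog_cons_succ, ih, completeHomog, add_zero, pow_succ']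

theorem mul_completeHomog_append_singleton {a : R} {l : List R} (hl : ∀ y ∈ l, a * y = 0) (x : R)
    (d : ℕ) : a * completeHomog (l ++ [x]) d = a * x ^ d := by
  induction l with
  | nil => rw [List.nil_append, completeHomog_singleton]
  | cons y l ih =>
    obtain ⟨hy, hl⟩ := List.forall_mem_cons.1 hl
    cases d with
    | zero => rw [completeHomog_zero, pow_zero]
    | succ d =>
      rw [List.cons_append, completeHomog_cons_succ, mul_add, ← mul_assoc, hy, zero_mul, zero_add,
        ih hl]

open Polynomial in
theorem isMonicOfDegree_completeHomog [Nontrivial R] (l : List R) (d : ℕ) :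
    IsMonicOfDegree (completeHomog (l.map C ++ [Polynomial.X]) d) d := by
  induction l generalizing d with
  | nil => simpa only [List.map_nil, List.nil_append, completeHomog_singleton]
      using isMonicOfDegree_X_pow R d
  | cons y l ihl =>
    induction d with
    | zero => rw [completeHomog_zero, isMonicOfDegree_zero_iff]
    | succ d ihd =>
      rw [List.map_cons, List.cons_append] at ihd ⊢
      rw [completeHomog_cons_succ]
      refine (ihl (d + 1)).add_left ?_
      exact (natDegree_C_mul_le _ _).trans_lt (by rw [ihd.natDegree_eq]; exact d.lt_succ_self)

end CompleteHomog

theorem take_ofFn_succ {α : Type*} {n : ℕ} (x : Fin n → α) (j : Fin n) :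
    (List.ofFn x).take (j + 1) = (List.ofFn x).take j ++ [x j] := by
  rw [List.take_succ_eq_append_getElem (by simp), List.getElem_ofFn]

theorem exists_lt_of_mem_take_ofFn {α : Type*} {n : ℕ} {x : Fin n → α} {j : Fin n} {y : α}
    (hy : y ∈ (List.ofFn x).take j) : ∃ i < j, x i = y := by
  obtain ⟨i, hi, rfl⟩ := List.mem_take_iff_getElem.1 hy
  rw [lt_min_iff] at hi
  exact ⟨⟨i, hi.1.trans j.2⟩, hi.1, by simp⟩

theorem of_mul_root_pow_eq_zero_iff {B : Type*} [CommRing B] {f : Polynomial B} (hf : f.Monic)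
    {e : ℕ} (he : e < f.natDegree) {b : B} :
    AdjoinRoot.of f b * AdjoinRoot.root f ^ e = 0 ↔ b = 0 := by
  refine ⟨fun h => ?_, fun h => by rw [h, map_zero, zero_mul]⟩
  by_contra hb
  refine AdjoinRoot.mk_ne_zero_of_natDegree_lt hf (g := .C b * .X ^ e) ?_ ?_ ?_
  · rwa [Ne, Polynomial.C_mul_X_pow_eq_monomial, Polynomial.monomial_eq_zero_iff]
  · exact (Polynomial.natDegree_C_mul_X_pow_le b e).trans_lt he
  · rwa [map_mul, map_pow, AdjoinRoot.mk_C, AdjoinRoot.mk_X]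

theorem mul_eq_zero_iff_mem_span {A R : Type*} [CommSemiring A] [CommRing R] [Algebra A R]
    {s : Set R} {p : R} (hs : ∀ x ∈ s, x * p = 0) (hp : ∀ c : A, algebraMap A R c * p = 0 → c = 0)
    (hR : ∀ y, ∃ c : A, y - algebraMap A R c ∈ Ideal.span s) (y : R) :
    y * p = 0 ↔ y ∈ Ideal.span s := by
  have hspan : ∀ z ∈ Ideal.span s, z * p = 0 := by
    have hle : Ideal.span s ≤ Ideal.torsionOf R R p := Ideal.span_le.2 hs
    exact fun z hz => hle hz
  refine ⟨fun hy => ?_, hspan y⟩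
  obtain ⟨c, hc⟩ := hR y
  have hcp : algebraMap A R c * p = 0 := by
    simpa only [sub_mul, hy, zero_sub, neg_eq_zero] using hspan _ hc
  rwa [hp c hcp, map_zero, sub_zero] at hc

/-- The family `x_0, …, x_{n-1}` satisfies the relations `h_{N-j}(x_0, …, x_j) = 0` for `j < n`.
For `n = k` and `N = m + k` these are the defining relations of `R(k,m)`; keeping `N` fixed makes
the relations for an initial segment of the family a subset of those for the whole family. -/
def FlagRelations {R : Type*} [CommSemiring R] {n : ℕ} (N : ℕ) (x : Fin n → R) : Prop :=
  ∀ j : Fin n, completeHomog ((List.ofFn x).take (j + 1)) (N - j) = 0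

namespace FlagRelations

variable {R S : Type*} [CommSemiring R] [CommSemiring S] {n N : ℕ} {x : Fin n → R}

theorem map (φ : R →+* S) (hx : FlagRelations N x) : FlagRelations N (φ ∘ x) := fun j => by
  rw [← List.map_ofFn, ← List.map_take, ← map_completeHomog, hx j, map_zero]

theorem snoc (hx : FlagRelations N x) {y : R}
    (hy : completeHomog (List.ofFn x ++ [y]) (N - n) = 0) :
    FlagRelations N (Fin.snoc x y : Fin (n + 1) → R) := by
  have hsnoc : List.ofFn (Fin.snoc x y : Fin (n + 1) → R) = List.ofFn x ++ [y] := by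
    rw [List.ofFn_succ_last]
    simp only [Fin.snoc_castSucc, Fin.snoc_last]
  intro j
  rw [hsnoc]
  induction j using Fin.lastCases with
  | last => rwa [List.take_of_length_le (by simp)]
  | cast j =>
    rw [List.take_append_of_le_length (by simp)]
    exact hx j

theorem prod_Iic_mul_eq_zero (hx : FlagRelations N x) (hn : n ≤ N) (j : Fin n) :
    (∏ t ∈ Finset.Iic j, x t ^ (N - 1 - t)) * x j = 0 := by
  induction j using WellFoundedLT.induction with
  | ind j ih =>
    set a := ∏ t ∈ Finset.Iio j, x t ^ (N - 1 - t)
    have hkill : ∀ y ∈ (List.ofFn x).take j, a * y = 0 := by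
      intro y hy
      obtain ⟨i, hij, rfl⟩ := exists_lt_of_mem_take_ofFn hy
      have hsub : Finset.Iic i ⊆ Finset.Iio j := fun t ht =>
        Finset.mem_Iio.2 ((Finset.mem_Iic.1 ht).trans_lt hij)
      refine zero_dvd_iff.1 (ih i hij ▸ ?_)
      exact mul_dvd_mul_right (Finset.prod_dvd_prod_of_subset _ _ _ hsub) _
    calc (∏ t ∈ Finset.Iic j, x t ^ (N - 1 - t)) * x j
        = a * x j ^ (N - j) := by
          rw [← Finset.Iio_insert, Finset.prod_insert (by simp), mul_comm (x j ^ _), mul_assoc,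
            ← pow_succ, show N - 1 - j + 1 = N - j by omega]
      _ = a * completeHomog ((List.ofFn x).take j ++ [x j]) (N - j) :=
          (mul_completeHomog_append_singleton hkill _ _).symm
      _ = 0 := by rw [← take_ofFn_succ, hx j, mul_zero]

theorem mul_prod_eq_zero (hx : FlagRelations N x) (hn : n ≤ N) (j : Fin n) :
    x j * ∏ t, x t ^ (N - 1 - t) = 0 := by
  refine zero_dvd_iff.1 (hx.prod_Iic_mul_eq_zero hn j ▸ ?_)
  rw [mul_comm]
  exact mul_dvd_mul_left _ (Finset.prod_dvd_prod_of_subset _ _ _ (Finset.subset_univ _))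

open Polynomial in
theorem exists_adjoinRoot {B : Type*} [CommRing B] [Nontrivial B] {x : Fin n → B}
    (hx : FlagRelations N x) (hn : n < N) :
    ∃ f : B[X], FlagRelations N (Fin.snoc (AdjoinRoot.of f ∘ x) (AdjoinRoot.root f) :
        Fin (n + 1) → AdjoinRoot f) ∧
      ∀ b, AdjoinRoot.of f b * AdjoinRoot.root f ^ (N - 1 - n) = 0 ↔ b = 0 := by
  let f : B[X] := completeHomog ((List.ofFn x).map C ++ [Polynomial.X]) (N - n)
  have hmonic : IsMonicOfDegree f (N - n) := isMonicOfDegree_completeHomog _ _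
  refine ⟨f, (hx.map _).snoc ?_,
    fun b => of_mul_root_pow_eq_zero_iff hmonic.monic (by rw [hmonic.natDegree_eq]; omega)⟩
  calc completeHomog (List.ofFn (AdjoinRoot.of f ∘ x) ++ [AdjoinRoot.root f]) (N - n)
      = AdjoinRoot.mk f (completeHomog ((List.ofFn x).map C ++ [Polynomial.X]) (N - n)) := by
        simp [map_completeHomog, Function.comp_def]
    _ = 0 := AdjoinRoot.mk_self

end FlagRelations

theorem exists_flagRelations (A : Type u) [CommRing A] [Nontrivial A] {n N : ℕ} (hn : n ≤ N) :
    ∃ (B : Type u) (_ : CommRing B) (_ : Algebra A B) (x : Fin n → B), FlagRelations N x ∧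
      ∀ c : A, algebraMap A B c * ∏ t, x t ^ (N - 1 - t) = 0 ↔ c = 0 := by
  induction n with
  | zero => exact ⟨A, inferInstance, inferInstance, Fin.elim0, fun j => j.elim0, by simp⟩
  | succ n ih =>
    obtain ⟨B, _, _, x, hx, htop⟩ := ih (by omega)
    have : Nontrivial B := ⟨_, 0, fun h => one_ne_zero ((htop 1).1 h)⟩
    obtain ⟨f, hf, hroot⟩ := hx.exists_adjoinRoot hn
    refine ⟨AdjoinRoot f, inferInstance, inferInstance, _, hf, fun c => ?_⟩
    rw [← htop c, ← hroot, Fin.prod_univ_castSucc, ← mul_assoc]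
    simp [IsScalarTower.algebraMap_apply A B (AdjoinRoot f)]

/-- The ideal `flagIdeal k m` with coefficients in an arbitrary ring `A` instead of `ZMod 2`. -/
noncomputable def flagIdealOver (A : Type*) [CommRing A] (k m : ℕ) :
    Ideal (MvPolynomial (Fin k) A) :=
  Ideal.span { p | ∃ i : ℕ, 1 ≤ i ∧ i ≤ k ∧
    p = completeHomog (((List.finRange k).take (k + 1 - i)).map MvPolynomial.X) (m + i) }

/-- The ring `R(k,m)` with coefficients in an arbitrary ring `A` instead of `ZMod 2`. -/
abbrev FlagRingOver (A : Type*) [CommRing A] (k m : ℕ) : Type _ :=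
  MvPolynomial (Fin k) A ⧸ flagIdealOver A k m

/-- The image of the variable `x_{j+1}` in `FlagRingOver A k m` (`j` is 0-indexed). -/
noncomputable def xGenOver (A : Type*) [CommRing A] (k m : ℕ) (j : Fin k) : FlagRingOver A k m :=
  Ideal.Quotient.mk (flagIdealOver A k m) (MvPolynomial.X j)

section FlagRingOver

variable {A : Type u} [CommRing A] {k m : ℕ}

theorem flagIdealOver_le_ker_iff {S : Type*} [CommSemiring S] (φ : MvPolynomial (Fin k) A →+* S) :
    flagIdealOver A k m ≤ RingHom.ker φ ↔ FlagRelations (m + k) (φ ∘ MvPolynomial.X) := by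
  have hmap : ∀ i d, φ (completeHomog (((List.finRange k).take i).map MvPolynomial.X) d) =
      completeHomog ((List.ofFn (φ ∘ MvPolynomial.X)).take i) d := fun i d => by
    rw [map_completeHomog, List.map_map, List.map_take, List.ofFn_eq_map]
  refine Ideal.span_le.trans ⟨fun h j => ?_, ?_⟩
  · rw [← hmap]
    refine h ⟨k - j, by omega, by omega, ?_⟩
    rw [show k + 1 - (k - j) = j + 1 by omega, show m + (k - j) = m + k - j by omega]
  · rintro h _ ⟨i, hi, hik, rfl⟩
    have hrel := h ⟨k - i, by omega⟩
    rwa [← hmap, show k - i + 1 = k + 1 - i by omega, show m + k - (k - i) = m + i by omega] at hrel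

variable (A k m)

theorem flagRelations_xGenOver : FlagRelations (m + k) (xGenOver A k m) :=
  (flagIdealOver_le_ker_iff (Ideal.Quotient.mk (flagIdealOver A k m))).1 Ideal.mk_ker.ge

theorem eq_zero_of_algebraMap_mul_prod_xGenOver [Nontrivial A] {c : A}
    (hc : algebraMap A (FlagRingOver A k m) c * ∏ t, xGenOver A k m t ^ (m + k - 1 - t) = 0) :
    c = 0 := by
  obtain ⟨B, _, _, x, hx, htop⟩ := exists_flagRelations A (Nat.le_add_left k m)
  let φ : MvPolynomial (Fin k) A →ₐ[A] B := MvPolynomial.aeval x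
  have hφ : flagIdealOver A k m ≤ RingHom.ker φ := by
    refine (flagIdealOver_le_ker_iff (φ : MvPolynomial (Fin k) A →+* B)).2 ?_
    convert hx
    ext j
    exact MvPolynomial.aeval_X x j
  let ψ : FlagRingOver A k m →ₐ[A] B := Ideal.Quotient.liftₐ _ φ hφ
  have hψ : ∀ j, ψ (xGenOver A k m j) = x j := MvPolynomial.aeval_X x
  simpa only [map_mul, map_prod, map_pow, map_zero, AlgHom.commutes, hψ, htop]
    using congrArg ψ hc

theorem exists_sub_algebraMap_mem_span_xGenOver (y : FlagRingOver A k m) :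
    ∃ c : A, y - algebraMap A _ c ∈ Ideal.span (Set.range (xGenOver A k m)) := by
  obtain ⟨p, rfl⟩ := Ideal.Quotient.mk_surjective y
  refine ⟨p.constantCoeff, ?_⟩
  have hp : p - .C p.constantCoeff ∈ MvPolynomial.idealOfVars (Fin k) A := by
    rw [← pow_one (MvPolynomial.idealOfVars _ _), MvPolynomial.mem_pow_idealOfVars_iff']
    intro e he
    simp [(Finsupp.degree_eq_zero_iff e).1 (Nat.lt_one_iff.1 he), MvPolynomial.constantCoeff_eq]
  have hmk := Ideal.mem_map_of_mem (Ideal.Quotient.mk (flagIdealOver A k m)) hp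
  rwa [Ideal.map_span, ← Set.range_comp, map_sub] at hmk

theorem statement4_general [Nontrivial A] :
    (∀ j : Fin k, (∏ t : Fin k, xGenOver A k m t ^ (if t ≤ j then m + k - 1 - t.val else 0)) *
      xGenOver A k m j = 0) ∧
    (∏ t : Fin k, xGenOver A k m t ^ (m + k - 1 - t.val)) ≠ 0 ∧
    (∀ y : FlagRingOver A k m,
      y * (∏ t : Fin k, xGenOver A k m t ^ (m + k - 1 - t.val)) = 0 ↔
        y ∈ Ideal.span (Set.range (xGenOver A k m))) := by
  have hrel := flagRelations_xGenOver A k m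
  have hk : k ≤ m + k := Nat.le_add_left k m
  refine ⟨fun j => ?_, fun h => ?_, mul_eq_zero_iff_mem_span ?_
    (fun _ => eq_zero_of_algebraMap_mul_prod_xGenOver A k m)
    (exists_sub_algebraMap_mem_span_xGenOver A k m)⟩
  · simpa only [pow_ite, pow_zero, ← Finset.prod_filter, Finset.filter_ge_eq_Iic]
      using hrel.prod_Iic_mul_eq_zero hk j
  · exact one_ne_zero (eq_zero_of_algebraMap_mul_prod_xGenOver A k m (c := 1) (by rw [h, mul_zero]))
  · rintro _ ⟨j, rfl⟩
    exact hrel.mul_prod_eq_zero hk j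

end FlagRingOver

/-- (a) for each `1 ≤ j ≤ k`, `x_1^{m+k-1} x_2^{m+k-2} ⋯ x_j^{m+k-j} · x_j = 0`
in `R(k,m)`; (b) the element `x_1^{m+k-1} x_2^{m+k-2} ⋯ x_k^m` is nonzero and its
annihilator is exactly the ideal `(x_1, …, x_k)`. -/
theorem statement4 (k m : ℕ) (hk : 0 < k) (hm : 0 < m) :
    (∀ j : Fin k,
      (∏ t : Fin k, xGen k m t ^ (if t ≤ j then m + k - 1 - t.val else 0)) * xGen k m j = 0) ∧
    (∏ t : Fin k, xGen k m t ^ (m + k - 1 - t.val)) ≠ 0 ∧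
    (∀ y : FlagRing k m,
      y * (∏ t : Fin k, xGen k m t ^ (m + k - 1 - t.val)) = 0 ↔
        y ∈ Ideal.span (Set.range (xGen k m))) :=
  statement4_general (ZMod 2) k m
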